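/- Let B ∈ F₂[x] be an even polynomial with gcd(B², σ(B²)) = 1, and let P₁, P₂ be two distinct odd irreducible polynomials in F₂[x] not dividing B. If A := B²·P₁·P₂ satisfies σ(A) = A, then A ∈ {x(x+1)²(x²+x+1), x²(x+1)(x²+x+1), x⁴(x+1)⁴(x⁴+x³+1)(x⁴+x³+x²+x+1)}. -/

import Mathlib

/-!
Since `σ(B²)` is prime to `B²` and `σ(B²)(P₁ + 1)(P₂ + 1) = B² P₁ P₂`, it divides `P₁ P₂`. The
left-hand side vanishes at `0` and `1` because `P₁` and `P₂` are odd, so both `x` and `x + 1`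
divide `B`. Each coprime nonconstant factor of `B²` contributes a nonconstant factor of
`σ(B²) ∣ P₁ P₂` (`degree_sigma`, `sigma_mul`, `split_two`), so `B = x ^ a (x + 1) ^ b`, and
`P₁`, `P₂` are, in some order, `σ(x ^ (2a))` and `σ((x + 1) ^ (2b))`.

Summing the geometric series in `B² = (P₁ + 1)(P₂ + 1)` and extracting a square root gives
`(x ^ a + 1)((x + 1) ^ b + 1) = x ^ a (x + 1) ^ b`. Comparing factors, `a = b` and
`x ^ a + 1 = (x + 1) ^ a`, so `a = 2 ^ k` (`exists_two_pow`). As `x` has order dividing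
`2a + 1` modulo the irreducible `σ(x ^ (2a))` of degree `2a = 2 ^ (k + 1)`, the degree divides
`2(k + 1)`, which forces `k ≤ 1` (`two_pow_le_one`). For `k = 0` the two primes coincide;
`k = 1` is the degree 16 polynomial, the only possibility of the three that actually occurs.
-/

open Polynomial

/-- The sum of all divisors of a polynomial over `F₂` (junk value `0` when the
divisor set is infinite, i.e. for `A = 0`). -/
noncomputable def sigma (A : Polynomial (ZMod 2)) : Polynomial (ZMod 2) :=
  ∑ᶠ (D : Polynomial (ZMod 2)) (_ : D ∣ A), D

/-- A binary polynomial is odd if it evaluates to `1` at both `0` and `1`. -/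
def IsOdd (B : Polynomial (ZMod 2)) : Prop := B.eval 0 = 1 ∧ B.eval 1 = 1

/-- A binary polynomial is even if it is not odd. -/
def IsEven (B : Polynomial (ZMod 2)) : Prop := ¬ IsOdd B

/-! ### Units and degrees over `F₂` -/

/-- The only unit of `F₂[x]` is `1`; hence associated polynomials are equal. -/
noncomputable instance uniqueUnitsF2 : Unique (ZMod 2)[X]ˣ where
  default := 1
  uniq u := by
    obtain ⟨r, hr, h⟩ := Polynomial.isUnit_iff.1 u.isUnit
    have h1 : r = 1 := by
      have : ∀ r : ZMod 2, IsUnit r → r = 1 := by decide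
      exact this r hr
    ext1
    rw [← h, h1]
    simp

lemma eq_one_of_isUnit {f : (ZMod 2)[X]} (h : IsUnit f) : f = 1 := by
  obtain ⟨u, rfl⟩ := h
  rw [Subsingleton.elim u 1, Units.val_one]

lemma eq_of_dvd_dvd {f g : (ZMod 2)[X]} (h : f ∣ g) (h' : g ∣ f) : f = g :=
  associated_iff_eq.1 (associated_of_dvd_dvd h h')

lemma monic_F2 {f : (ZMod 2)[X]} (h : f ≠ 0) : f.Monic := by
  have : ∀ r : ZMod 2, r ≠ 0 → r = 1 := by decide
  exact this _ (leadingCoeff_ne_zero.2 h)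

lemma prime_X_add_one : Prime (X + 1 : (ZMod 2)[X]) := by
  have h := prime_X_sub_C (R := ZMod 2) (1 : ZMod 2)
  rwa [CharTwo.sub_eq_add, C_1] at h

/-! ### The sum of divisors -/

lemma finite_divisors {A : (ZMod 2)[X]} (hA : A ≠ 0) : {D | D ∣ A}.Finite := by
  have h : Fintype {D // D ∣ A} := UniqueFactorizationMonoid.fintypeSubtypeDvd A hA
  exact Set.finite_coe_iff.1 (Finite.of_fintype {D // D ∣ A})

lemma sigma_eq {A : (ZMod 2)[X]} (hA : A ≠ 0) :
    sigma A = ∑ D ∈ (finite_divisors hA).toFinset, D :=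
  finsum_mem_eq_finite_toFinset_sum _ _

/-- `sigma` is multiplicative: divisors of a coprime product factor uniquely. -/
lemma sigma_mul {A B : (ZMod 2)[X]} (hA : A ≠ 0) (hB : B ≠ 0) (h : IsCoprime A B) :
    sigma (A * B) = sigma A * sigma B := by
  rw [sigma_eq hA, sigma_eq hB, sigma_eq (mul_ne_zero hA hB), Finset.sum_mul_sum,
    ← Finset.sum_product']
  symm
  refine Finset.sum_bij (fun p _ => p.1 * p.2) ?_ ?_ ?_ ?_
  · rintro ⟨d, e⟩ hp
    simp only [Finset.mem_product, Set.Finite.mem_toFinset, Set.mem_ofPred_eq] at hp ⊢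
    exact mul_dvd_mul hp.1 hp.2
  · rintro ⟨d, e⟩ hp ⟨d', e'⟩ hp' heq
    simp only [Finset.mem_product, Set.Finite.mem_toFinset, Set.mem_ofPred_eq] at hp hp' heq
    have c1 : IsCoprime d e' := (h.of_isCoprime_of_dvd_left hp.1).of_isCoprime_of_dvd_right hp'.2
    have c2 : IsCoprime d' e := (h.of_isCoprime_of_dvd_left hp'.1).of_isCoprime_of_dvd_right hp.2
    have hd : d = d' := eq_of_dvd_dvd
      (c1.dvd_of_dvd_mul_right (heq ▸ dvd_mul_right d e))
      (c2.dvd_of_dvd_mul_right (heq ▸ dvd_mul_right d' e'))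
    subst hd
    have hd0 : d ≠ 0 := ne_zero_of_dvd_ne_zero hA hp.1
    rw [mul_left_cancel₀ hd0 heq]
  · intro D hD
    simp only [Set.Finite.mem_toFinset, Set.mem_ofPred_eq] at hD
    obtain ⟨d, e, hd, he, rfl⟩ := exists_dvd_and_dvd_of_dvd_mul hD
    exact ⟨(d, e), by simp [hd, he], rfl⟩
  · intro _ _; rfl

lemma sigma_prime_pow {p : (ZMod 2)[X]} (hp : Prime p) (n : ℕ) :
    sigma (p ^ n) = ∑ i ∈ Finset.range (n + 1), p ^ i := by
  classical
  rw [sigma_eq (pow_ne_zero n hp.ne_zero)]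
  have : (finite_divisors (pow_ne_zero n hp.ne_zero)).toFinset
      = (Finset.range (n + 1)).image (fun i => p ^ i) := by
    ext D
    simp [dvd_prime_pow hp, associated_iff_eq, eq_comm]
  rw [this, Finset.sum_image]
  intro i _ j _ hij
  exact pow_injective_of_not_isUnit hp.not_isUnit hp.ne_zero hij

lemma sigma_prime {p : (ZMod 2)[X]} (hp : Prime p) : sigma p = p + 1 := by
  have h := sigma_prime_pow hp 1
  simpa [Finset.sum_range_succ, add_comm] using h

/-- The divisor `A` itself dominates the sum, all others having smaller degree. -/
lemma degree_sigma {A : (ZMod 2)[X]} (hA : A ≠ 0) : (sigma A).degree = A.degree := by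
  classical
  have hmem : A ∈ (finite_divisors hA).toFinset := by simp
  rw [sigma_eq hA, ← Finset.add_sum_erase _ _ hmem]
  apply degree_add_eq_left_of_degree_lt
  refine (degree_sum_le _ _).trans_lt ?_
  rw [Finset.sup_lt_iff (bot_lt_iff_ne_bot.2 (degree_ne_bot.2 hA))]
  intro D hD
  simp only [Finset.mem_erase, Set.Finite.mem_toFinset, Set.mem_ofPred_eq] at hD
  obtain ⟨hDA, hdvd⟩ := hD
  have hD0 := ne_zero_of_dvd_ne_zero hA hdvd
  refine lt_of_le_of_ne (degree_le_of_dvd hdvd hA) fun hdeg => hDA ?_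
  exact (eq_of_monic_of_dvd_of_natDegree_le (monic_F2 hD0) (monic_F2 hA) hdvd
    (natDegree_eq_of_degree_eq hdeg).ge).symm

lemma not_isUnit_sigma {A : (ZMod 2)[X]} (hA : A ≠ 0) (h : ¬ IsUnit A) : ¬ IsUnit (sigma A) := by
  intro hu
  apply h
  rw [isUnit_iff_degree_eq_zero] at hu ⊢
  rwa [← degree_sigma hA]

/-! ### Factorisations and exponents over `F₂` -/

/-- Unique factorisation: two nonunits whose product divides a product of two
irreducibles exhaust it. -/
lemma split_two {P Q f g u : (ZMod 2)[X]} (hP : Prime P) (hQ : Irreducible Q)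
    (hf : ¬ IsUnit f) (hg : ¬ IsUnit g) (h : f * g * u = P * Q) :
    u = 1 ∧ (f = P ∧ g = Q ∨ f = Q ∧ g = P) := by
  have key : ∀ {f g : (ZMod 2)[X]}, ¬ IsUnit g → f * g * u = P * Q → P ∣ f →
      u = 1 ∧ f = P ∧ g = Q := by
    rintro f g hg h ⟨f', rfl⟩
    have h' : f' * u * g = Q := mul_left_cancel₀ hP.ne_zero (by linear_combination h)
    rcases hQ.isUnit_or_isUnit h'.symm with h1 | h1
    · have e1 := eq_one_of_isUnit (isUnit_of_mul_isUnit_left h1)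
      have e2 := eq_one_of_isUnit (isUnit_of_mul_isUnit_right h1)
      subst e1 e2
      simpa using h'
    · exact absurd h1 hg
  have hd : P ∣ f * g * u := h ▸ dvd_mul_right P Q
  rcases hP.dvd_or_dvd hd with hd | ⟨u', rfl⟩
  · rcases hP.dvd_or_dvd hd with hd | hd
    · obtain ⟨a, b, c⟩ := key hg h hd
      exact ⟨a, .inl ⟨b, c⟩⟩
    · obtain ⟨a, b, c⟩ := key hf (by rw [mul_comm g f]; exact h) hd
      exact ⟨a, .inr ⟨c, b⟩⟩
  · exfalso
    have h' : f * g * u' = Q := mul_left_cancel₀ hP.ne_zero (by linear_combination h)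
    rcases hQ.isUnit_or_isUnit h'.symm with h1 | h1
    · exact hf (isUnit_of_mul_isUnit_left h1)
    · have h2 : f * u' * g = Q := by linear_combination h'
      rcases hQ.isUnit_or_isUnit h2.symm with h3 | h3
      · exact hf (isUnit_of_mul_isUnit_left h3)
      · exact hg h3

/-- If `x ^ a + 1 = (x + 1) ^ a` over `F₂` then `a` is a power of two: halve `a` by
injectivity of squaring, and differentiate when `a` is odd. -/
lemma exists_two_pow (a : ℕ) (ha : a ≠ 0)
    (h : (X ^ a + 1 : (ZMod 2)[X]) = (X + 1) ^ a) : ∃ k, a = 2 ^ k := by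
  induction a using Nat.strong_induction_on with
  | _ a ih =>
    rcases Nat.even_or_odd' a with ⟨b, rfl | rfl⟩
    · have hb : (X ^ b + 1 : (ZMod 2)[X]) = (X + 1) ^ b := by
        apply frobenius_inj (ZMod 2)[X] 2
        simp only [frobenius_def, CharTwo.add_sq, one_pow]
        rw [← pow_mul, ← pow_mul, mul_comm b 2, h]
      obtain ⟨k, rfl⟩ := ih b (by omega) (by omega) hb
      exact ⟨k + 1, by ring⟩
    · rcases Nat.eq_zero_or_pos b with rfl | hb
      · exact ⟨0, by simp⟩
      · exfalso
        have hder := congrArg (fun f => (derivative f).eval 0) h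
        simp [derivative_pow] at hder
        have h2 : (2 : ZMod 2) = 0 := by decide
        simp [h2, Nat.pos_iff_ne_zero.1 hb] at hder

/-- With `q = 2 ^ k`, the element `x` of `F₂[x]/(P)` has order dividing `2q + 1`, hence is
fixed by the Frobenius power of exponent `2 * (k + 1)`; irreducibility of `P` then forces
`2 ^ (k + 1) ∣ 2 * (k + 1)`. -/
lemma two_pow_le_one {P : (ZMod 2)[X]} (hP : Irreducible P) (k : ℕ)
    (hdeg : P.natDegree = 2 * 2 ^ k) (h : P ∣ X ^ (2 * 2 ^ k + 1) - 1) : k ≤ 1 := by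
  have h1 : P ∣ X ^ (Nat.card (ZMod 2)) ^ (2 * (k + 1)) - X := by
    have e : 2 ^ (2 * (k + 1)) = (2 * 2 ^ k + 1) * (2 * 2 ^ k - 1) + 1 := by
      have : 1 ≤ 2 ^ k := Nat.one_le_two_pow
      zify [show 1 ≤ 2 * 2 ^ k by omega]
      ring
    rw [Nat.card_zmod, e, pow_succ]
    have h2 := sub_dvd_pow_sub_pow (X ^ (2 * 2 ^ k + 1) : (ZMod 2)[X]) 1 (2 * 2 ^ k - 1)
    rw [one_pow, ← pow_mul] at h2
    have h3 := (h.trans h2).mul_right X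
    rwa [sub_mul, one_mul] at h3
  have h2 := hP.natDegree_dvd_of_dvd_X_pow_card_pow_sub_X h1
  rw [hdeg] at h2
  have h3 : 2 ^ k ≤ k + 1 := Nat.le_of_dvd (by omega) (Nat.dvd_of_mul_dvd_mul_left two_pos h2)
  by_contra hk
  have h4 : ∀ j, j + 3 < 2 ^ (j + 2) := by
    intro j
    induction j with
    | zero => norm_num
    | succ j ih => rw [show j + 1 + 2 = (j + 2) + 1 by ring, pow_succ]; omega
  have h5 := h4 (k - 2)
  rw [show k - 2 + 2 = k by omega] at h5
  omega

/-- The heart of the argument: `B ^ 2 = (P + 1)(Q + 1)` with `B = x ^ a (x + 1) ^ b`, where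
`P` and `Q` are the divisor sums of `x ^ (2a)` and `(x + 1) ^ (2b)`. -/
lemma exponents {a b : ℕ} (ha : a ≠ 0)
    (hP : Irreducible (∑ i ∈ Finset.range (2 * a + 1), (X : (ZMod 2)[X]) ^ i))
    (h : ((∑ i ∈ Finset.range (2 * a + 1), (X : (ZMod 2)[X]) ^ i) + 1)
      * ((∑ i ∈ Finset.range (2 * b + 1), (X + 1 : (ZMod 2)[X]) ^ i) + 1)
      = (X ^ a * (X + 1) ^ b) ^ 2) : a = b ∧ (a = 1 ∨ a = 2) := by
  have two : (2 : (ZMod 2)[X]) = 0 := CharTwo.two_eq_zero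
  set P := ∑ i ∈ Finset.range (2 * a + 1), (X : (ZMod 2)[X]) ^ i with hPdef
  set Q := ∑ i ∈ Finset.range (2 * b + 1), (X + 1 : (ZMod 2)[X]) ^ i with hQdef
  have gP : P * (X - 1) = X ^ (2 * a + 1) - 1 := geom_sum_mul _ _
  have gQ : Q * (X + 1 - 1) = (X + 1) ^ (2 * b + 1) - 1 := geom_sum_mul _ _
  have eP : (P + 1) * (X + 1) = X * (X ^ a + 1) ^ 2 := by
    linear_combination gP + (P - X ^ (a + 1)) * two
  have eQ : (Q + 1) * X = (X + 1) * ((X + 1) ^ b + 1) ^ 2 := by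
    linear_combination gQ - (X + 1) ^ (b + 1) * two - two
  have hX : (X : (ZMod 2)[X]) ≠ 0 := X_ne_zero
  have hX1 : (X + 1 : (ZMod 2)[X]) ≠ 0 := prime_X_add_one.ne_zero
  -- Clearing `x (x + 1)` leaves an equality of squares.
  have hroot : (X ^ a + 1) * ((X + 1) ^ b + 1) = (X ^ a * (X + 1) ^ b : (ZMod 2)[X]) := by
    apply frobenius_inj (ZMod 2)[X] 2
    apply mul_left_cancel₀ (mul_ne_zero hX hX1)
    simp only [frobenius_def]
    rw [← h]
    linear_combination -(Q + 1) * X * eP - X * (X ^ a + 1) ^ 2 * eQ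
  have hXa : IsCoprime (X ^ a + 1 : (ZMod 2)[X]) (X ^ a) := ⟨1, -1, by ring⟩
  have hXb : IsCoprime ((X + 1) ^ b + 1 : (ZMod 2)[X]) ((X + 1) ^ b) := ⟨1, -1, by ring⟩
  have hd : (X ^ a + 1 : (ZMod 2)[X]) ∣ (X + 1) ^ b :=
    hXa.dvd_of_dvd_mul_left (hroot ▸ dvd_mul_right _ _)
  obtain ⟨c, hc, hca⟩ := (dvd_prime_pow prime_X_add_one b).1 hd
  rw [associated_iff_eq] at hca
  have hca' : c = a := by
    have := congrArg natDegree hca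
    rw [← C_1, natDegree_X_pow_add_C, natDegree_pow, natDegree_X_add_C] at this
    omega
  subst hca'
  obtain ⟨k, hk⟩ := exists_two_pow c ha hca
  have hcb : c = b := by
    -- Comparing the powers of `x + 1` on both sides of `hroot`.
    refine le_antisymm hc ?_
    have h1 : ((X + 1) ^ b : (ZMod 2)[X]) ∣ X ^ c + 1 :=
      hXb.symm.dvd_of_dvd_mul_right (hroot ▸ dvd_mul_left _ _)
    rw [hca] at h1
    exact (pow_dvd_pow_iff hX1 prime_X_add_one.not_isUnit).1 h1
  refine ⟨hcb, ?_⟩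
  have hdeg : P.natDegree = 2 * 2 ^ k := by
    have hP0 := hP.ne_zero
    have := congrArg natDegree gP
    rw [← C_1, natDegree_mul hP0 (X_sub_C_ne_zero 1), natDegree_X_sub_C,
      natDegree_X_pow_sub_C] at this
    omega
  have hk1 := two_pow_le_one hP k hdeg (hk ▸ ⟨_, gP.symm⟩)
  interval_cases k <;> simp_all

lemma split_even {B : (ZMod 2)[X]} (hB0 : B ≠ 0) : ∃ a b C,
    B = X ^ a * ((X + 1) ^ b * C) ∧ C ≠ 0 ∧ IsCoprime X C ∧ IsCoprime (X + 1) C := by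
  have f1 : FiniteMultiplicity X B := FiniteMultiplicity.of_prime_left prime_X hB0
  obtain ⟨D, hD, hXD⟩ := f1.exists_eq_pow_mul_and_not_dvd
  have hD0 : D ≠ 0 := by rintro rfl; simp at hXD
  have f2 : FiniteMultiplicity (X + 1) D := FiniteMultiplicity.of_prime_left prime_X_add_one hD0
  obtain ⟨C, hC, hXC⟩ := f2.exists_eq_pow_mul_and_not_dvd
  refine ⟨_, _, C, by rw [← hC]; exact hD, by rintro rfl; simp at hXC, ?_, ?_⟩
  · exact (prime_X.irreducible.coprime_iff_not_dvd).2
      fun h => hXD (hC ▸ h.mul_left _)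
  · exact (prime_X_add_one.irreducible.coprime_iff_not_dvd).2 hXC

/-! ### Perfect polynomials with two odd simple prime factors -/

theorem statement2 (B : Polynomial (ZMod 2)) (hB : IsEven B)
    (hgcd : IsCoprime (B ^ 2) (sigma (B ^ 2)))
    (P₁ P₂ : Polynomial (ZMod 2))
    (h1 : Irreducible P₁) (h1o : IsOdd P₁) (h1d : ¬ P₁ ∣ B)
    (h2 : Irreducible P₂) (h2o : IsOdd P₂) (h2d : ¬ P₂ ∣ B)
    (hne : P₁ ≠ P₂)
    (A : Polynomial (ZMod 2)) (hA : A = B ^ 2 * P₁ * P₂)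
    (hperf : sigma A = A) :
    A = X * (X + 1) ^ 2 * (X ^ 2 + X + 1) ∨
    A = X ^ 2 * (X + 1) * (X ^ 2 + X + 1) ∨
    A = X ^ 4 * (X + 1) ^ 4 * (X ^ 4 + X ^ 3 + 1) * (X ^ 4 + X ^ 3 + X ^ 2 + X + 1) := by
  have hB0 : B ≠ 0 := by rintro rfl; exact h1d (dvd_zero _)
  have hB2 : B ^ 2 ≠ 0 := pow_ne_zero 2 hB0
  have c1 : IsCoprime (B ^ 2) P₁ := ((h1.coprime_iff_not_dvd).2 h1d).symm.pow_left
  have c2 : IsCoprime (B ^ 2) P₂ := ((h2.coprime_iff_not_dvd).2 h2d).symm.pow_left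
  have c3 : IsCoprime P₁ P₂ := (h1.coprime_iff_not_dvd).2 fun hd =>
    hne (associated_iff_eq.1 (h1.associated_of_dvd h2 hd))
  have hsig : sigma (B ^ 2) * (P₁ + 1) * (P₂ + 1) = B ^ 2 * P₁ * P₂ := by
    rw [← sigma_prime h1.prime, ← sigma_prime h2.prime, ← sigma_mul hB2 h1.ne_zero c1,
      ← sigma_mul (mul_ne_zero hB2 h1.ne_zero) h2.ne_zero (c2.mul_left c3), ← hA, hperf]
  have hdvd : sigma (B ^ 2) ∣ P₁ * P₂ := by
    apply hgcd.symm.dvd_of_dvd_mul_left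
    rw [← mul_assoc, ← hsig, mul_assoc]
    exact dvd_mul_right _ _
  -- An odd polynomial plus one vanishes at `0` and at `1`, so `x` and `x + 1` divide `B`.
  have hone : (1 : ZMod 2) + 1 = 0 := by decide
  have e0 : B.eval 0 = 0 := by
    have := congrArg (eval 0) hsig
    simpa [h1o.1, h2o.1, hone] using this.symm
  have e1 : B.eval 1 = 0 := by
    have := congrArg (eval 1) hsig
    simpa [h1o.2, h2o.2, hone] using this.symm
  obtain ⟨a, b, C, rfl, hC0, cX, cX1⟩ := split_even hB0
  have hCX : C.eval 0 ≠ 0 := by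
    obtain ⟨u, v, huv⟩ := cX
    intro h0
    have := congrArg (eval 0) huv
    simp [h0] at this
  have hCX1 : C.eval 1 ≠ 0 := by
    obtain ⟨u, v, huv⟩ := cX1
    intro h0
    have := congrArg (eval 1) huv
    simp [h0, hone] at this
  have ha : a ≠ 0 := by rintro rfl; simp [hCX] at e0
  have hb : b ≠ 0 := by rintro rfl; simp [hCX1] at e1
  have hX1 := prime_X_add_one
  have cXX : IsCoprime (X : (ZMod 2)[X]) (X + 1) := ⟨-1, 1, by ring⟩
  have hfac : sigma ((X ^ a * ((X + 1) ^ b * C)) ^ 2)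
      = sigma (X ^ (2 * a)) * (sigma ((X + 1) ^ (2 * b)) * sigma (C ^ 2)) := by
    rw [← sigma_mul (pow_ne_zero _ hX1.ne_zero) (pow_ne_zero _ hC0) cX1.pow,
      ← sigma_mul (pow_ne_zero _ X_ne_zero)
        (mul_ne_zero (pow_ne_zero _ hX1.ne_zero) (pow_ne_zero _ hC0))
        (cXX.pow.mul_right cX.pow)]
    congr 1
    ring
  obtain ⟨K, hK⟩ := hdvd
  rw [hfac] at hK
  have n1 : ¬ IsUnit (sigma ((X : (ZMod 2)[X]) ^ (2 * a))) :=
    not_isUnit_sigma (pow_ne_zero _ X_ne_zero) fun h =>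
      prime_X.not_isUnit ((isUnit_pow_iff (by omega)).1 h)
  have n2 : ¬ IsUnit (sigma ((X + 1 : (ZMod 2)[X]) ^ (2 * b))) :=
    not_isUnit_sigma (pow_ne_zero _ hX1.ne_zero) fun h =>
      hX1.not_isUnit ((isUnit_pow_iff (by omega)).1 h)
  obtain ⟨hu, hPQ⟩ := split_two (u := sigma (C ^ 2) * K) h1.prime h2 n1 n2
    (by rw [hK]; ring)
  have hC1 : C = 1 := by
    by_contra hC
    refine not_isUnit_sigma (pow_ne_zero 2 hC0) (fun h => hC ?_) (IsUnit.of_mul_eq_one _ hu)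
    exact eq_one_of_isUnit ((isUnit_pow_iff two_ne_zero).1 h)
  have hsC : sigma ((1 : (ZMod 2)[X]) ^ 2) = 1 := by
    have := sigma_prime_pow (prime_X (R := ZMod 2)) 0
    simpa using this
  subst hC1
  rw [hfac, hsC] at hsig
  rw [mul_one] at hsig hA
  have s1 := sigma_prime_pow (prime_X (R := ZMod 2)) (2 * a)
  have s2 := sigma_prime_pow hX1 (2 * b)
  have hprod : sigma (X ^ (2 * a)) * sigma ((X + 1) ^ (2 * b)) = P₁ * P₂ := by
    rcases hPQ with ⟨h, h'⟩ | ⟨h, h'⟩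
    · rw [h, h']
    · rw [h, h', mul_comm]
  have hprod' : (sigma (X ^ (2 * a)) + 1) * (sigma ((X + 1) ^ (2 * b)) + 1)
      = (P₁ + 1) * (P₂ + 1) := by
    rcases hPQ with ⟨h, h'⟩ | ⟨h, h'⟩
    · rw [h, h']
    · rw [h, h', mul_comm]
  have hirr : Irreducible (sigma ((X : (ZMod 2)[X]) ^ (2 * a))) := by
    rcases hPQ with ⟨h, _⟩ | ⟨h, _⟩ <;> rwa [h]
  have hne' : sigma ((X : (ZMod 2)[X]) ^ (2 * a)) ≠ sigma ((X + 1) ^ (2 * b)) := by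
    rcases hPQ with ⟨h, h'⟩ | ⟨h, h'⟩ <;> rw [h, h']
    exacts [hne, hne.symm]
  have hmain : (sigma (X ^ (2 * a)) + 1) * (sigma ((X + 1) ^ (2 * b)) + 1)
      = (X ^ a * (X + 1) ^ b) ^ 2 := by
    apply mul_left_cancel₀ (mul_ne_zero h1.ne_zero h2.ne_zero)
    linear_combination (P₁ * P₂) * hprod' + hsig - (P₁ + 1) * (P₂ + 1) * hprod
  rw [s1, s2] at hmain hne' hprod
  rw [s1] at hirr
  have two : (2 : (ZMod 2)[X]) = 0 := CharTwo.two_eq_zero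
  obtain ⟨rfl, rfl | rfl⟩ := exponents ha hirr hmain
  · -- Both divisor sums equal `x ^ 2 + x + 1`.
    refine absurd ?_ hne'
    simp only [Finset.sum_range_succ, Finset.sum_range_zero]
    linear_combination -(X + 1) * two
  · right; right
    rw [hA, mul_assoc (_ ^ 2), ← hprod]
    simp only [Finset.sum_range_succ, Finset.sum_range_zero]
    have hQ : 1 + (X + 1) + (X + 1) ^ 2 + (X + 1) ^ 3 + (X + 1) ^ 4
        = (X ^ 4 + X ^ 3 + 1 : (ZMod 2)[X]) := by
      linear_combination (2 * X ^ 3 + 5 * X ^ 2 + 5 * X + 2) * two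
    linear_combination X ^ 4 * (X + 1) ^ 4 * (X ^ 4 + X ^ 3 + X ^ 2 + X + 1) * hQ
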